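/- Let Φ be a Leonard system with parameter array ({θ_i}; {θ*_i}; {φ_i}; {ϕ_i}). Then for 0 ≤ r ≤ d, tr(E_r E*_0) = (φ_1 ⋯ φ_r · ϕ_1 ⋯ ϕ_{d−r}) / (η*_d(θ*_0) τ_r(θ_r) η_{d−r}(θ_r)). -/

import Mathlib

/-!
Write `E*_0 = w vᵀ`, which is possible since `E*_0` has rank one, and set `u_i = τ_i(A) w`. The
matrix `A* - θ*_i` maps `u_i` into the line spanned by `u_{i-1}`: the difference of
`(A* - θ*_i) u_i` and a suitable multiple of `u_{i-1}` lies in `E*_0 V + ⋯ + E*_{k-1} V` and in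
`E_k V + ⋯ + E_d V` with `k = i - 1`, and these two subspaces meet only in zero. Comparing traces
identifies the scalar as `φ_i`. Transposing the matrices and reversing the order of the `E_i` turns
this into the row relation `E*_0 η_i(A) (A* - θ*_i) = ϕ_i E*_0 η_{i-1}(A)`.

For `r + s + 1 = d` one has `η_{s+1}(A) τ_{r+1}(A) = 0`, so evaluating
`E*_0 η_{s+1}(A) A* τ_{r+1}(A) E*_0` by either relation gives
`ϕ_{s+1} tr(η_s(A) τ_{r+1}(A) E*_0) = φ_{r+1} tr(η_{s+1}(A) τ_r(A) E*_0)`. This recursion starts at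
`tr(τ_d(A) E*_0)`, a multiple of `φ_1 ⋯ φ_d`, and it ends with the theorem because
`η_{d-r}(A) τ_r(A)` is a multiple of `E_r`.
-/

open Matrix Polynomial

/-- A Leonard system in the matrix algebra `Mat_{d+1}(K)`: multiplicity-free
elements `A`, `Astar` with orderings `E`, `Estar` of their primitive idempotents
satisfying the irreducible-tridiagonality conditions. -/
structure LeonardSystem (K : Type*) [Field K] (d : ℕ) where
  A : Matrix (Fin (d+1)) (Fin (d+1)) K
  Astar : Matrix (Fin (d+1)) (Fin (d+1)) K
  E : Fin (d+1) → Matrix (Fin (d+1)) (Fin (d+1)) K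
  Estar : Fin (d+1) → Matrix (Fin (d+1)) (Fin (d+1)) K
  θ : Fin (d+1) → K
  θs : Fin (d+1) → K
  θ_inj : Function.Injective θ
  θs_inj : Function.Injective θs
  E_ne : ∀ i, E i ≠ 0
  Es_ne : ∀ i, Estar i ≠ 0
  E_mul : ∀ i j, E i * E j = if i = j then E i else 0
  Es_mul : ∀ i j, Estar i * Estar j = if i = j then Estar i else 0
  E_sum : ∑ i, E i = 1
  Es_sum : ∑ i, Estar i = 1
  A_eq : A = ∑ i, θ i • E i
  As_eq : Astar = ∑ i, θs i • Estar i
  trid0 : ∀ i j : Fin (d+1), ((i : ℤ) - (j : ℤ)).natAbs > 1 → E i * Astar * E j = 0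
  trid1 : ∀ i j : Fin (d+1), ((i : ℤ) - (j : ℤ)).natAbs = 1 → E i * Astar * E j ≠ 0
  strid0 : ∀ i j : Fin (d+1), ((i : ℤ) - (j : ℤ)).natAbs > 1 → Estar i * A * Estar j = 0
  strid1 : ∀ i j : Fin (d+1), ((i : ℤ) - (j : ℤ)).natAbs = 1 → Estar i * A * Estar j ≠ 0

namespace LeonardSystem

variable {K : Type*} [Field K] {d : ℕ}

/-- Eigenvalues indexed by `ℕ` (junk value outside range). -/
def θN (L : LeonardSystem K d) (i : ℕ) : K := if h : i < d + 1 then L.θ ⟨i, h⟩ else 0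

def θsN (L : LeonardSystem K d) (i : ℕ) : K := if h : i < d + 1 then L.θs ⟨i, h⟩ else 0

/-- `τ_i(A) = (A-θ₀)(A-θ₁)⋯(A-θ_{i-1})`. -/
def tauA (L : LeonardSystem K d) : ℕ → Matrix (Fin (d+1)) (Fin (d+1)) K
  | 0 => 1
  | i + 1 => L.tauA i * (L.A - L.θN i • 1)

/-- `η_i(A) = (A-θ_d)(A-θ_{d-1})⋯(A-θ_{d-i+1})`. -/
def etaA (L : LeonardSystem K d) : ℕ → Matrix (Fin (d+1)) (Fin (d+1)) K
  | 0 => 1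
  | i + 1 => L.etaA i * (L.A - L.θN (d - i) • 1)

/-- `τ*_i(A*)`. -/
def tausA (L : LeonardSystem K d) : ℕ → Matrix (Fin (d+1)) (Fin (d+1)) K
  | 0 => 1
  | i + 1 => L.tausA i * (L.Astar - L.θsN i • 1)

/-- `η*_i(A*)`. -/
def etasA (L : LeonardSystem K d) : ℕ → Matrix (Fin (d+1)) (Fin (d+1)) K
  | 0 => 1
  | i + 1 => L.etasA i * (L.Astar - L.θsN (d - i) • 1)

/-- Scalar `τ_i(x)`. -/
def tauS (L : LeonardSystem K d) (i : ℕ) (x : K) : K := ∏ j ∈ Finset.range i, (x - L.θN j)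

/-- Scalar `η_i(x)`. -/
def etaS (L : LeonardSystem K d) (i : ℕ) (x : K) : K := ∏ j ∈ Finset.range i, (x - L.θN (d - j))

/-- Scalar `τ*_i(x)`. -/
def tausS (L : LeonardSystem K d) (i : ℕ) (x : K) : K := ∏ j ∈ Finset.range i, (x - L.θsN j)

/-- Scalar `η*_i(x)`. -/
def etasS (L : LeonardSystem K d) (i : ℕ) (x : K) : K := ∏ j ∈ Finset.range i, (x - L.θsN (d - j))

/-- First split sequence `φ_i`. -/
noncomputable def varphi (L : LeonardSystem K d) (i : ℕ) : K :=
  (L.θsN 0 - L.θsN i) * (L.tauA i * L.Estar 0).trace / (L.tauA (i-1) * L.Estar 0).trace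

/-- Second split sequence `ϕ_i`. -/
noncomputable def phi (L : LeonardSystem K d) (i : ℕ) : K :=
  (L.θsN 0 - L.θsN i) * (L.etaA i * L.Estar 0).trace / (L.etaA (i-1) * L.Estar 0).trace

/-- `φ₁φ₂⋯φ_r`. -/
noncomputable def varphiProd (L : LeonardSystem K d) (r : ℕ) : K :=
  ∏ j ∈ Finset.range r, L.varphi (j + 1)

/-- `ϕ₁ϕ₂⋯ϕ_r`. -/
noncomputable def phiProd (L : LeonardSystem K d) (r : ℕ) : K :=
  ∏ j ∈ Finset.range r, L.phi (j + 1)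

/-- `φ_d φ_{d-1} ⋯ φ_{d-r+1}`. -/
noncomputable def varphiRevProd (L : LeonardSystem K d) (r : ℕ) : K :=
  ∏ j ∈ Finset.range r, L.varphi (d - j)

/-- `ϕ_d ϕ_{d-1} ⋯ ϕ_{d-r+1}`. -/
noncomputable def phiRevProd (L : LeonardSystem K d) (r : ℕ) : K :=
  ∏ j ∈ Finset.range r, L.phi (d - j)

end LeonardSystem

section OrthogonalIdempotents

variable {K n : Type*} [Field K] [Fintype n] [DecidableEq n] {F : n → Matrix n n K}

theorem linearIndependent_of_orthogonalIdempotents_mulVec {ι : Type*}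
    {F : ι → Matrix n n K} (hF : OrthogonalIdempotents F) {x : ι → n → K}
    (hx : ∀ i, F i *ᵥ x i ≠ 0) : LinearIndependent K fun i => F i *ᵥ x i := by
  rw [linearIndependent_iff']
  intro s g hg i hi
  have h := congrArg (F i *ᵥ ·) hg
  simp only [mulVec_sum, mulVec_smul, mulVec_mulVec, mulVec_zero] at h
  rw [Finset.sum_eq_single_of_mem i hi
    fun j _ hj => by rw [hF.ortho hj.symm, zero_mulVec, smul_zero], (hF.idem i).eq] at h
  exact (smul_eq_zero.mp h).resolve_right (hx i)

theorem exists_eq_vecMulVec_of_orthogonalIdempotents (hF : OrthogonalIdempotents F)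
    (hne : ∀ i, F i ≠ 0) (i : n) : ∃ w v : n → K, F i = vecMulVec w v := by
  have exists_mulVec_ne_zero (i : n) : ∃ x, F i *ᵥ x ≠ 0 := by
    by_contra! h
    exact hne i (ext_of_mulVec_single fun j => by rw [h, zero_mulVec])
  choose x hx using exists_mulVec_ne_zero
  have : Nonempty n := ⟨i⟩
  let b := basisOfLinearIndependentOfCardEqFinrank
    (linearIndependent_of_orthogonalIdempotents_mulVec hF hx) (by simp)
  have F_mulVec_b (j : n) : F i *ᵥ b j = if i = j then b i else 0 := by
    by_cases h : i = j <;> simp [b, mulVec_mulVec, hF.mul_eq, h]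
  have F_mulVec (y : n → K) : F i *ᵥ y = b.repr y i • b i := by
    conv_lhs => rw [← b.sum_repr y]
    simp only [mulVec_sum, mulVec_smul, F_mulVec_b, smul_ite, smul_zero, Finset.sum_ite_eq,
      Finset.mem_univ, if_true]
  refine ⟨b i, fun j => b.repr (Pi.single j 1) i, ext_of_mulVec_single fun j => ?_⟩
  rw [F_mulVec, vecMulVec_mulVec, dotProduct_single_one, op_smul_eq_smul]

theorem trace_eq_one_of_orthogonalIdempotents (hF : OrthogonalIdempotents F) (hne : ∀ i, F i ≠ 0)
    (i : n) : (F i).trace = 1 := by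
  obtain ⟨w, v, hwv⟩ := exists_eq_vecMulVec_of_orthogonalIdempotents hF hne i
  have h : (F i).trace • F i = (1 : K) • F i := by
    rw [one_smul]
    nth_rw 3 [← (hF.idem i).eq]
    rw [hwv, vecMulVec_mul_vecMulVec, trace_vecMulVec, dotProduct_comm, vecMulVec_smul]
  exact smul_left_injective K (hne i) h

theorem mul_eq_zero_or_mul_eq_zero_of_orthogonalIdempotents (hF : OrthogonalIdempotents F)
    (hne : ∀ i, F i ≠ 0) {i : n} {X Y : Matrix n n K} (h : X * F i * Y = 0) :
    X * F i = 0 ∨ F i * Y = 0 := by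
  obtain ⟨w, v, hwv⟩ := exists_eq_vecMulVec_of_orthogonalIdempotents hF hne i
  rw [hwv, mul_vecMulVec, vecMulVec_mul, vecMulVec_eq_zero] at h
  rw [hwv, mul_vecMulVec, vecMulVec_mul]
  exact h.imp (fun h => by rw [h, zero_vecMulVec]) (fun h => by rw [h, vecMulVec_zero])

theorem exists_mul_mul_eq_smul_of_orthogonalIdempotents (hF : OrthogonalIdempotents F)
    (hne : ∀ i, F i ≠ 0) {i j : n} {X : Matrix n n K} (hX : F i * X * F j ≠ 0)
    (Y : Matrix n n K) : ∃ c : K, F i * Y * F j = c • (F i * X * F j) := by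
  obtain ⟨w, v, hwv⟩ := exists_eq_vecMulVec_of_orthogonalIdempotents hF hne i
  obtain ⟨w', v', hwv'⟩ := exists_eq_vecMulVec_of_orthogonalIdempotents hF hne j
  have mul_mul_eq (M : Matrix n n K) : F i * M * F j = (v ᵥ* M ⬝ᵥ w') • vecMulVec w v' := by
    rw [hwv, hwv', vecMulVec_mul, vecMulVec_mul_vecMulVec, vecMulVec_smul]
  rw [mul_mul_eq] at hX
  refine ⟨(v ᵥ* Y ⬝ᵥ w') / (v ᵥ* X ⬝ᵥ w'), ?_⟩
  rw [mul_mul_eq, mul_mul_eq, smul_smul, div_mul_cancel₀ _ (left_ne_zero_of_smul hX)]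

end OrthogonalIdempotents

section SumEqOne

variable {R ι : Type*} [NonAssocSemiring R] [Fintype ι] {F : ι → R}

theorem mul_eq_mul_mul_of_sum_eq_one (hF : ∑ i, F i = 1) {X Z : R} (i : ι)
    (h : ∀ j ≠ i, X * F j * Z = 0) : X * Z = X * F i * Z := by
  rw [← Fintype.sum_eq_single i h, ← Finset.sum_mul, ← Finset.mul_sum, hF, mul_one]

theorem mul_eq_zero_of_sum_eq_one (hF : ∑ i, F i = 1) {X Z : R} (h : ∀ i, X * F i * Z = 0) :
    X * Z = 0 := by
  rw [← mul_one X, ← hF, Finset.mul_sum, Finset.sum_mul, Finset.sum_eq_zero fun i _ => h i]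

theorem eq_zero_of_sum_eq_one (hF : ∑ i, F i = 1) {Z : R} (h : ∀ i, F i * Z = 0) : Z = 0 := by
  rw [← one_mul Z]
  exact mul_eq_zero_of_sum_eq_one hF fun i => by rw [one_mul, h]

end SumEqOne

theorem mul_sum_smul_sub_of_orthogonalIdempotents {K R ι : Type*} [CommRing K] [Ring R]
    [Algebra K R] [Fintype ι] {F : ι → R} (hF : OrthogonalIdempotents F) (t : ι → K) (x : K)
    (i : ι) : F i * (∑ j, t j • F j - x • 1) = (t i - x) • F i := by
  classical
  simp [mul_sub, Finset.mul_sum, hF.mul_eq, sub_smul]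

namespace LeonardSystem

variable {K : Type*} [Field K] {d : ℕ} (L : LeonardSystem K d)

theorem θN_val (i : Fin (d + 1)) : L.θN i = L.θ i := dif_pos i.2

theorem θsN_val (i : Fin (d + 1)) : L.θsN i = L.θs i := dif_pos i.2

theorem θN_injOn : Set.InjOn L.θN (Set.Iic d) := by
  intro i hi j hj h
  have hθ : L.θ ⟨i, Nat.lt_succ_of_le hi⟩ = L.θ ⟨j, Nat.lt_succ_of_le hj⟩ := by
    simpa only [← θN_val] using h
  exact congrArg Fin.val (L.θ_inj hθ)

theorem θsN_injOn : Set.InjOn L.θsN (Set.Iic d) := by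
  intro i hi j hj h
  have hθs : L.θs ⟨i, Nat.lt_succ_of_le hi⟩ = L.θs ⟨j, Nat.lt_succ_of_le hj⟩ := by
    simpa only [← θsN_val] using h
  exact congrArg Fin.val (L.θs_inj hθs)

theorem orthogonalIdempotents_E : OrthogonalIdempotents L.E :=
  OrthogonalIdempotents.iff_mul_eq.mpr L.E_mul

theorem orthogonalIdempotents_Estar : OrthogonalIdempotents L.Estar :=
  OrthogonalIdempotents.iff_mul_eq.mpr L.Es_mul

theorem E_mul_A_sub (i : Fin (d + 1)) (x : K) :
    L.E i * (L.A - x • 1) = (L.θ i - x) • L.E i := by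
  rw [L.A_eq, mul_sum_smul_sub_of_orthogonalIdempotents L.orthogonalIdempotents_E]

theorem Estar_mul_Astar_sub (i : Fin (d + 1)) (x : K) :
    L.Estar i * (L.Astar - x • 1) = (L.θs i - x) • L.Estar i := by
  rw [L.As_eq, mul_sum_smul_sub_of_orthogonalIdempotents L.orthogonalIdempotents_Estar]

theorem E_mul_Astar_sub_mul_E {i j : Fin (d + 1)} (hij : i ≠ j) (x : K) :
    L.E i * (L.Astar - x • 1) * L.E j = L.E i * L.Astar * L.E j := by
  simp [mul_sub, sub_mul, L.E_mul, hij]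

theorem Estar_mul_A_sub_mul_Estar {i j : Fin (d + 1)} (hij : i ≠ j) (x : K) :
    L.Estar i * (L.A - x • 1) * L.Estar j = L.Estar i * L.A * L.Estar j := by
  simp [mul_sub, sub_mul, L.Es_mul, hij]

theorem E_mul_Astar_sub_mul_eq_zero {i : Fin (d + 1)} {Z : Matrix (Fin (d + 1)) (Fin (d + 1)) K}
    (x : K) (h : ∀ j : Fin (d + 1), (j : ℕ) ≤ i + 1 → L.E j * Z = 0) :
    L.E i * (L.Astar - x • 1) * Z = 0 := by
  refine mul_eq_zero_of_sum_eq_one L.E_sum fun j => ?_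
  rcases le_or_gt (j : ℕ) (i + 1) with hj | hj
  · rw [mul_assoc, h j hj, mul_zero]
  · rw [L.E_mul_Astar_sub_mul_E (by omega), L.trid0 i j (by omega), zero_mul]

theorem Estar_mul_A_sub_mul_eq_zero {i : Fin (d + 1)}
    {Z : Matrix (Fin (d + 1)) (Fin (d + 1)) K} (x : K)
    (h : ∀ j : Fin (d + 1), (i : ℕ) ≤ j + 1 → L.Estar j * Z = 0) :
    L.Estar i * (L.A - x • 1) * Z = 0 := by
  refine mul_eq_zero_of_sum_eq_one L.Es_sum fun j => ?_
  rcases le_or_gt (i : ℕ) (j + 1) with hj | hj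
  · rw [mul_assoc, h j hj, mul_zero]
  · rw [L.Estar_mul_A_sub_mul_Estar (by omega), L.strid0 i j (by omega), zero_mul]

-- `E_i A* Z = t E_i Z` is a recurrence in which `E_{i+1} Z` is determined by `E_j Z` for `j ≤ i`.
theorem eq_zero_of_Astar_mul_eq_smul {Z : Matrix (Fin (d + 1)) (Fin (d + 1)) K} {t : K}
    (hZ : L.Astar * Z = t • Z) (hE : L.E 0 * Z = 0) : Z = 0 := by
  have E_mul_eq_zero (m : ℕ) (hm : m < d + 1) : L.E ⟨m, hm⟩ * Z = 0 := by
    induction m using Nat.strong_induction_on with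
    | _ m ih =>
    obtain _ | m := m
    · exact hE
    let i : Fin (d + 1) := ⟨m, by omega⟩
    let j : Fin (d + 1) := ⟨m + 1, hm⟩
    have h : L.E i * L.Astar * L.E j * Z = 0 := by
      rw [← mul_eq_mul_mul_of_sum_eq_one L.E_sum j, mul_assoc, hZ, mul_smul_comm,
        ih m m.lt_succ_self, smul_zero]
      intro k hk
      rcases le_or_gt (k : ℕ) m with hkm | hkm
      · rw [mul_assoc, ih k (by omega) k.2, mul_zero]
      · rw [L.trid0 i k (by grind), zero_mul]
    exact (mul_eq_zero_or_mul_eq_zero_of_orthogonalIdempotents L.orthogonalIdempotents_E L.E_ne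
      h).resolve_left (L.trid1 i j (by grind))
  exact eq_zero_of_sum_eq_one L.E_sum fun i => E_mul_eq_zero i i.2

theorem eq_zero_of_E_mul_eq_zero_of_Estar_mul_eq_zero (k : ℕ)
    {Z : Matrix (Fin (d + 1)) (Fin (d + 1)) K}
    (hE : ∀ j : Fin (d + 1), (j : ℕ) < k → L.E j * Z = 0)
    (hEs : ∀ j : Fin (d + 1), k ≤ j → L.Estar j * Z = 0) : Z = 0 := by
  induction k generalizing Z with
  | zero => exact eq_zero_of_sum_eq_one L.Es_sum fun j => hEs j j.1.zero_le
  | succ k ih =>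
    have hZ : (L.Astar - L.θsN k • 1) * Z = 0 := by
      refine ih (fun j hj => ?_) (fun j hj => ?_)
      · rw [← mul_assoc]
        exact L.E_mul_Astar_sub_mul_eq_zero _ fun l hl => hE l (by omega)
      · rw [← mul_assoc, Estar_mul_Astar_sub, smul_mul_assoc]
        obtain rfl | hj := hj.eq_or_lt
        · rw [θsN_val, sub_self, zero_smul]
        · rw [hEs j hj, smul_zero]
    rw [sub_mul, smul_mul_assoc, one_mul, sub_eq_zero] at hZ
    exact L.eq_zero_of_Astar_mul_eq_smul hZ (hE 0 k.succ_pos)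

theorem commute_A_tauA (i : ℕ) : Commute L.A (L.tauA i) := by
  induction i with
  | zero => exact Commute.one_right _
  | succ i ih =>
    exact ih.mul_right ((Commute.refl _).sub_right ((Commute.one_right _).smul_right _))

theorem tauA_succ' (i : ℕ) : L.tauA (i + 1) = (L.A - L.θN i • 1) * L.tauA i :=
  (((L.commute_A_tauA i).sub_left ((Commute.one_left _).smul_left _)).eq).symm

theorem Estar_mul_tauA_mul_Estar_zero_eq_zero {i : ℕ} {j : Fin (d + 1)} (hij : i < j) :
    L.Estar j * (L.tauA i * L.Estar 0) = 0 := by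
  induction i generalizing j with
  | zero => rw [tauA, one_mul, L.Es_mul, if_neg (Fin.pos_iff_ne_zero.mp hij)]
  | succ i ih =>
    rw [tauA_succ', mul_assoc, ← mul_assoc]
    exact L.Estar_mul_A_sub_mul_eq_zero _ fun k hk => ih (by omega)

theorem Estar_mul_tauA_mul_Estar_zero_ne_zero (i : Fin (d + 1)) :
    L.Estar i * L.tauA i * L.Estar 0 ≠ 0 := by
  induction i using Fin.induction with
  | zero => simpa [tauA, L.Es_mul] using L.Es_ne 0
  | succ i ih =>
    intro h
    rw [Fin.val_succ, tauA_succ', mul_assoc, mul_assoc, ← mul_assoc,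
      mul_eq_mul_mul_of_sum_eq_one L.Es_sum i.castSucc,
      L.Estar_mul_A_sub_mul_Estar i.castSucc_lt_succ.ne'] at h
    · rw [mul_assoc] at ih
      exact (mul_eq_zero_or_mul_eq_zero_of_orthogonalIdempotents L.orthogonalIdempotents_Estar
        L.Es_ne h).elim (L.strid1 _ _ (by simp)) ih
    · intro k hk
      rcases lt_or_ge (i : ℕ) k with hik | hik
      · rw [mul_assoc, L.Estar_mul_tauA_mul_Estar_zero_eq_zero hik, mul_zero]
      · rw [L.Estar_mul_A_sub_mul_Estar (by grind), L.strid0 _ _ (by grind), zero_mul]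

theorem E_mul_tauA (i : ℕ) (j : Fin (d + 1)) :
    L.E j * L.tauA i = L.tauS i (L.θ j) • L.E j := by
  induction i with
  | zero => simp [tauA, tauS]
  | succ i ih =>
    rw [tauA, ← mul_assoc, ih, smul_mul_assoc, E_mul_A_sub, smul_smul, tauS, tauS,
      Finset.prod_range_succ]

theorem E_mul_etaA (i : ℕ) (j : Fin (d + 1)) :
    L.E j * L.etaA i = L.etaS i (L.θ j) • L.E j := by
  induction i with
  | zero => simp [etaA, etaS]
  | succ i ih =>
    rw [etaA, ← mul_assoc, ih, smul_mul_assoc, E_mul_A_sub, smul_smul, etaS, etaS,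
      Finset.prod_range_succ]

theorem tauS_θ_eq_zero {i : ℕ} {j : Fin (d + 1)} (hji : (j : ℕ) < i) : L.tauS i (L.θ j) = 0 :=
  Finset.prod_eq_zero (Finset.mem_range.mpr hji) (by rw [θN_val, sub_self])

theorem etaS_θ_eq_zero {i : ℕ} {j : Fin (d + 1)} (hji : d < j + i) : L.etaS i (L.θ j) = 0 := by
  refine Finset.prod_eq_zero (i := d - j) (Finset.mem_range.mpr (by omega)) ?_
  rw [Nat.sub_sub_self j.is_le, θN_val, sub_self]

theorem tauS_θ_ne_zero {i : ℕ} {j : Fin (d + 1)} (hij : i ≤ j) : L.tauS i (L.θ j) ≠ 0 := by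
  refine Finset.prod_ne_zero_iff.mpr fun k hk => ?_
  have hki := Finset.mem_range.mp hk
  rw [← θN_val]
  exact sub_ne_zero.mpr (L.θN_injOn.ne j.is_le (show k ≤ d by omega) (by omega))

theorem etaS_θ_ne_zero {i : ℕ} {j : Fin (d + 1)} (hij : i + j ≤ d) :
    L.etaS i (L.θ j) ≠ 0 := by
  refine Finset.prod_ne_zero_iff.mpr fun k hk => ?_
  have hki := Finset.mem_range.mp hk
  rw [← θN_val]
  exact sub_ne_zero.mpr (L.θN_injOn.ne j.is_le (Nat.sub_le d k) (by omega))

theorem E_mul_etaA_mul_tauA (r s : ℕ) (j : Fin (d + 1)) :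
    L.E j * (L.etaA s * L.tauA r) = (L.tauS r (L.θ j) * L.etaS s (L.θ j)) • L.E j := by
  rw [← mul_assoc, E_mul_etaA, smul_mul_assoc, E_mul_tauA, smul_smul, mul_comm]

theorem etaA_mul_tauA_eq_zero {r s : ℕ} (hrs : d < r + s) : L.etaA s * L.tauA r = 0 := by
  refine eq_zero_of_sum_eq_one L.E_sum fun j => ?_
  rw [E_mul_etaA_mul_tauA]
  rcases lt_or_ge (j : ℕ) r with hj | hj
  · rw [L.tauS_θ_eq_zero hj, zero_mul, zero_smul]
  · rw [L.etaS_θ_eq_zero (by omega), mul_zero, zero_smul]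

theorem etaA_mul_tauA (r : Fin (d + 1)) :
    L.etaA (d - r) * L.tauA r = (L.tauS r (L.θ r) * L.etaS (d - r) (L.θ r)) • L.E r := by
  have hE (j : Fin (d + 1)) (hj : j ≠ r) : 1 * L.E j * (L.etaA (d - r) * L.tauA r) = 0 := by
    rw [one_mul, E_mul_etaA_mul_tauA]
    rcases lt_or_gt_of_ne (Fin.val_ne_of_ne hj) with hj | hj
    · rw [L.tauS_θ_eq_zero hj, zero_mul, zero_smul]
    · rw [L.etaS_θ_eq_zero (by omega), mul_zero, zero_smul]
  have h := mul_eq_mul_mul_of_sum_eq_one L.E_sum r hE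
  rwa [one_mul, one_mul, E_mul_etaA_mul_tauA] at h

theorem exists_Astar_sub_mul_tauA_mul_Estar_zero {i : ℕ} (hi : i + 1 ≤ d) :
    ∃ c : K, (L.Astar - L.θsN (i + 1) • 1) * (L.tauA (i + 1) * L.Estar 0) =
      c • (L.tauA i * L.Estar 0) := by
  let k : Fin (d + 1) := ⟨i, by omega⟩
  obtain ⟨c, hc⟩ := exists_mul_mul_eq_smul_of_orthogonalIdempotents L.orthogonalIdempotents_Estar
    L.Es_ne (L.Estar_mul_tauA_mul_Estar_zero_ne_zero k)
    ((L.Astar - L.θsN (i + 1) • 1) * L.tauA (i + 1))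
  refine ⟨c, sub_eq_zero.mp (L.eq_zero_of_E_mul_eq_zero_of_Estar_mul_eq_zero i ?_ ?_)⟩
  · intro j hj
    have E_mul_tauA_eq_zero {m : ℕ} {l : Fin (d + 1)} (hl : (l : ℕ) < m) :
        L.E l * (L.tauA m * L.Estar 0) = 0 := by
      rw [← mul_assoc, E_mul_tauA, L.tauS_θ_eq_zero hl, zero_smul, zero_mul]
    rw [mul_sub, mul_smul_comm, E_mul_tauA_eq_zero hj, smul_zero, sub_zero, ← mul_assoc]
    exact L.E_mul_Astar_sub_mul_eq_zero _ fun l hl => E_mul_tauA_eq_zero (by omega)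
  · intro j hj
    rw [mul_sub, mul_smul_comm, sub_eq_zero]
    obtain hj | hj := hj.eq_or_lt
    · obtain rfl : k = j := Fin.ext hj
      simpa only [mul_assoc] using hc
    · rw [L.Estar_mul_tauA_mul_Estar_zero_eq_zero hj, smul_zero, ← mul_assoc,
        Estar_mul_Astar_sub, smul_mul_assoc]
      obtain hj | hj := (show i + 1 ≤ j from hj).eq_or_lt
      · rw [← θsN_val, ← hj, sub_self, zero_smul]
      · rw [L.Estar_mul_tauA_mul_Estar_zero_eq_zero hj, smul_zero]

theorem trace_Estar_zero : (L.Estar 0).trace = 1 :=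
  trace_eq_one_of_orthogonalIdempotents L.orthogonalIdempotents_Estar L.Es_ne 0

theorem trace_Estar_zero_mul_mul_Estar_zero (X : Matrix (Fin (d + 1)) (Fin (d + 1)) K) :
    (L.Estar 0 * X * L.Estar 0).trace = (X * L.Estar 0).trace := by
  rw [trace_mul_comm, ← mul_assoc, L.Es_mul, if_pos rfl, trace_mul_comm]

theorem θsN_sub_mul_trace_of_Astar_sub_mul_eq_smul {X Y : Matrix (Fin (d + 1)) (Fin (d + 1)) K}
    {x c : K} (h : (L.Astar - x • 1) * (X * L.Estar 0) = c • (Y * L.Estar 0)) :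
    (L.θsN 0 - x) * (X * L.Estar 0).trace = c * (Y * L.Estar 0).trace := by
  have hmul : (L.θsN 0 - x) • (L.Estar 0 * X * L.Estar 0) =
      c • (L.Estar 0 * Y * L.Estar 0) := by
    have := congrArg (L.Estar 0 * ·) h
    simpa only [← mul_assoc, Estar_mul_Astar_sub, mul_smul_comm, smul_mul_assoc,
      ← θsN_val, Fin.val_zero] using this
  simpa only [trace_smul, trace_Estar_zero_mul_mul_Estar_zero, smul_eq_mul]
    using congrArg trace hmul

-- If the trace vanished, `τ_{i+1}(A) E*_0` would consist of eigenvectors of `A*` killed by `E_0`.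
theorem trace_tauA_mul_Estar_zero_ne_zero {i : ℕ} (hi : i ≤ d) :
    (L.tauA i * L.Estar 0).trace ≠ 0 := by
  induction i with
  | zero => simp [tauA, trace_Estar_zero]
  | succ i ih =>
    intro h
    obtain ⟨c, hc⟩ := L.exists_Astar_sub_mul_tauA_mul_Estar_zero hi
    have hc0 : c = 0 := by
      have := L.θsN_sub_mul_trace_of_Astar_sub_mul_eq_smul hc
      rw [h, mul_zero] at this
      exact (mul_eq_zero.mp this.symm).resolve_right (ih (by omega))
    rw [hc0, zero_smul, sub_mul, smul_mul_assoc, one_mul, sub_eq_zero] at hc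
    have hE : L.E 0 * (L.tauA (i + 1) * L.Estar 0) = 0 := by
      rw [← mul_assoc, E_mul_tauA, L.tauS_θ_eq_zero i.succ_pos, zero_smul, zero_mul]
    refine L.Estar_mul_tauA_mul_Estar_zero_ne_zero ⟨i + 1, by omega⟩ ?_
    rw [mul_assoc, L.eq_zero_of_Astar_mul_eq_smul hc hE, mul_zero]

theorem varphi_succ_mul_trace {i : ℕ} (hi : i + 1 ≤ d) :
    L.varphi (i + 1) * (L.tauA i * L.Estar 0).trace =
      (L.θsN 0 - L.θsN (i + 1)) * (L.tauA (i + 1) * L.Estar 0).trace := by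
  rw [varphi, Nat.add_sub_cancel,
    div_mul_cancel₀ _ (L.trace_tauA_mul_Estar_zero_ne_zero (by omega))]

theorem Astar_sub_mul_tauA_mul_Estar_zero {i : ℕ} (hi : i + 1 ≤ d) :
    (L.Astar - L.θsN (i + 1) • 1) * (L.tauA (i + 1) * L.Estar 0) =
      L.varphi (i + 1) • (L.tauA i * L.Estar 0) := by
  obtain ⟨c, hc⟩ := L.exists_Astar_sub_mul_tauA_mul_Estar_zero hi
  have h := L.θsN_sub_mul_trace_of_Astar_sub_mul_eq_smul hc
  rw [← L.varphi_succ_mul_trace hi] at h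
  rw [hc, mul_right_cancel₀ (L.trace_tauA_mul_Estar_zero_ne_zero (by omega)) h]

theorem θsN_zero_sub_θsN_succ_ne_zero {i : ℕ} (hi : i + 1 ≤ d) :
    L.θsN 0 - L.θsN (i + 1) ≠ 0 :=
  sub_ne_zero.mpr (L.θsN_injOn.ne (Nat.zero_le d) hi i.succ_ne_zero.symm)

theorem varphi_succ_ne_zero {i : ℕ} (hi : i + 1 ≤ d) : L.varphi (i + 1) ≠ 0 := by
  refine left_ne_zero_of_mul (b := (L.tauA i * L.Estar 0).trace) ?_
  rw [L.varphi_succ_mul_trace hi]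
  exact mul_ne_zero (L.θsN_zero_sub_θsN_succ_ne_zero hi) (L.trace_tauA_mul_Estar_zero_ne_zero hi)

theorem varphiProd_succ (r : ℕ) : L.varphiProd (r + 1) = L.varphiProd r * L.varphi (r + 1) :=
  Finset.prod_range_succ _ r

theorem phiProd_succ (r : ℕ) : L.phiProd (r + 1) = L.phiProd r * L.phi (r + 1) :=
  Finset.prod_range_succ _ r

theorem varphiProd_eq {r : ℕ} (hr : r ≤ d) :
    L.varphiProd r =
      (∏ j ∈ Finset.range r, (L.θsN 0 - L.θsN (j + 1))) * (L.tauA r * L.Estar 0).trace := by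
  induction r with
  | zero => simp [varphiProd, tauA, trace_Estar_zero]
  | succ r ih =>
    rw [varphiProd_succ, ih (by omega), Finset.prod_range_succ]
    linear_combination
      (∏ j ∈ Finset.range r, (L.θsN 0 - L.θsN (j + 1))) * L.varphi_succ_mul_trace hr

theorem etasS_θs_zero :
    L.etasS d (L.θs 0) = ∏ j ∈ Finset.range d, (L.θsN 0 - L.θsN (j + 1)) := by
  rw [etasS, ← Finset.prod_range_reflect, ← θsN_val, Fin.val_zero]
  refine Finset.prod_congr rfl fun j hj => ?_
  have hjd := Finset.mem_range.mp hj
  rw [show d - (d - 1 - j) = j + 1 by omega]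

theorem etasS_θs_zero_ne_zero : L.etasS d (L.θs 0) ≠ 0 := by
  rw [etasS_θs_zero, Finset.prod_ne_zero_iff]
  exact fun j hj => L.θsN_zero_sub_θsN_succ_ne_zero (Finset.mem_range.mp hj)

/-- The Leonard system obtained by transposing all matrices. It exchanges relations between columns
`X E*_0` with relations between rows `E*_0 X`. -/
@[simps]
def transpose : LeonardSystem K d where
  A := L.Aᵀ
  Astar := L.Astarᵀ
  E i := (L.E i)ᵀ
  Estar i := (L.Estar i)ᵀ
  θ := L.θ
  θs := L.θs
  θ_inj := L.θ_inj
  θs_inj := L.θs_inj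
  E_ne i := transpose_eq_zero.not.mpr (L.E_ne i)
  Es_ne i := transpose_eq_zero.not.mpr (L.Es_ne i)
  E_mul i j := by
    rw [← transpose_mul, L.E_mul]
    obtain rfl | hij := eq_or_ne i j
    · simp
    · simp [hij, hij.symm]
  Es_mul i j := by
    rw [← transpose_mul, L.Es_mul]
    obtain rfl | hij := eq_or_ne i j
    · simp
    · simp [hij, hij.symm]
  E_sum := by rw [← transpose_sum, L.E_sum, transpose_one]
  Es_sum := by rw [← transpose_sum, L.Es_sum, transpose_one]
  A_eq := by simp only [L.A_eq, transpose_sum, transpose_smul]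
  As_eq := by simp only [L.As_eq, transpose_sum, transpose_smul]
  trid0 i j h := by
    rw [← transpose_mul, ← transpose_mul, ← mul_assoc, L.trid0 j i (by omega), transpose_zero]
  trid1 i j h := by
    rw [← transpose_mul, ← transpose_mul, ← mul_assoc, Ne, transpose_eq_zero]
    exact L.trid1 j i (by omega)
  strid0 i j h := by
    rw [← transpose_mul, ← transpose_mul, ← mul_assoc, L.strid0 j i (by omega), transpose_zero]
  strid1 i j h := by
    rw [← transpose_mul, ← transpose_mul, ← mul_assoc, Ne, transpose_eq_zero]
    exact L.strid1 j i (by omega)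

/-- The Leonard system obtained by reversing the order of the `E i`, Terwilliger's `Φ^⇓`. It
exchanges the two split sequences. -/
@[simps]
def reverse : LeonardSystem K d where
  A := L.A
  Astar := L.Astar
  E i := L.E i.rev
  Estar := L.Estar
  θ i := L.θ i.rev
  θs := L.θs
  θ_inj := L.θ_inj.comp Fin.rev_injective
  θs_inj := L.θs_inj
  E_ne i := L.E_ne i.rev
  Es_ne := L.Es_ne
  E_mul i j := by simp [L.E_mul]
  Es_mul := L.Es_mul
  E_sum := (Equiv.sum_comp Fin.revPerm L.E).trans L.E_sum
  Es_sum := L.Es_sum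
  A_eq := L.A_eq.trans (Equiv.sum_comp Fin.revPerm fun i => L.θ i • L.E i).symm
  As_eq := L.As_eq
  trid0 i j h := L.trid0 _ _ (by simp only [Fin.val_rev]; omega)
  trid1 i j h := L.trid1 _ _ (by simp only [Fin.val_rev]; omega)
  strid0 := L.strid0
  strid1 := L.strid1

theorem tauA_transpose (i : ℕ) : L.transpose.tauA i = (L.tauA i)ᵀ := by
  induction i with
  | zero => simp [tauA]
  | succ i ih =>
    have θN_transpose : L.transpose.θN i = L.θN i := rfl
    rw [tauA_succ', tauA, ih, θN_transpose, transpose_A, transpose_mul, transpose_sub,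
      transpose_smul, transpose_one]

theorem varphi_transpose (i : ℕ) : L.transpose.varphi i = L.varphi i := by
  have trace_transpose_eq (m : ℕ) :
      (L.transpose.tauA m * L.transpose.Estar 0).trace = (L.tauA m * L.Estar 0).trace := by
    rw [tauA_transpose, transpose_Estar, ← transpose_mul, trace_transpose, trace_mul_comm]
  rw [varphi, varphi, trace_transpose_eq, trace_transpose_eq]
  rfl

theorem θN_reverse {i : ℕ} (hi : i ≤ d) : L.reverse.θN i = L.θN (d - i) := by
  have := L.reverse.θN_val ⟨i, by omega⟩
  rw [reverse_θ, ← θN_val, Fin.val_rev] at this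
  simpa using this

theorem tauA_reverse {i : ℕ} (hi : i ≤ d + 1) : L.reverse.tauA i = L.etaA i := by
  induction i with
  | zero => rfl
  | succ i ih => rw [tauA, etaA, ih (by omega), L.θN_reverse (by omega), reverse_A]

theorem varphi_reverse {i : ℕ} (hi : i ≤ d + 1) : L.reverse.varphi i = L.phi i := by
  rw [varphi, phi, L.tauA_reverse hi, L.tauA_reverse (by omega), reverse_Estar]
  rfl

theorem Estar_zero_mul_tauA_mul_Astar_sub {i : ℕ} (hi : i + 1 ≤ d) :
    L.Estar 0 * L.tauA (i + 1) * (L.Astar - L.θsN (i + 1) • 1) =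
      L.varphi (i + 1) • (L.Estar 0 * L.tauA i) := by
  have θsN_transpose : L.transpose.θsN (i + 1) = L.θsN (i + 1) := rfl
  have h := congrArg Matrix.transpose (L.transpose.Astar_sub_mul_tauA_mul_Estar_zero hi)
  simpa only [tauA_transpose, varphi_transpose, θsN_transpose, transpose_Astar, transpose_Estar,
    transpose_mul, transpose_sub, transpose_smul, transpose_one, transpose_transpose] using h

theorem Estar_zero_mul_etaA_mul_Astar_sub {i : ℕ} (hi : i + 1 ≤ d) :
    L.Estar 0 * L.etaA (i + 1) * (L.Astar - L.θsN (i + 1) • 1) =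
      L.phi (i + 1) • (L.Estar 0 * L.etaA i) := by
  rw [← L.tauA_reverse (by omega), ← L.tauA_reverse (by omega), ← L.varphi_reverse (by omega)]
  exact L.reverse.Estar_zero_mul_tauA_mul_Astar_sub hi

theorem phi_succ_mul_trace_etaA_mul_tauA {r s : ℕ} (hrs : r + s + 1 = d) :
    L.phi (s + 1) * (L.etaA s * L.tauA (r + 1) * L.Estar 0).trace =
      L.varphi (r + 1) * (L.etaA (s + 1) * L.tauA r * L.Estar 0).trace := by
  have hzero : L.Estar 0 * L.etaA (s + 1) * (L.tauA (r + 1) * L.Estar 0) = 0 := by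
    rw [mul_assoc, ← mul_assoc (L.etaA _), L.etaA_mul_tauA_eq_zero (by omega), zero_mul, mul_zero]
  have shift (x y : K) :
      L.Estar 0 * L.etaA (s + 1) * (L.Astar - x • 1) * (L.tauA (r + 1) * L.Estar 0) =
        L.Estar 0 * L.etaA (s + 1) * ((L.Astar - y • 1) * (L.tauA (r + 1) * L.Estar 0)) := by
    rw [mul_sub, sub_mul, mul_smul_comm, smul_mul_assoc, mul_one, hzero, smul_zero, sub_zero,
      sub_mul, mul_sub, smul_mul_assoc, one_mul, mul_smul_comm, hzero, smul_zero, sub_zero,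
      mul_assoc]
  have h : L.phi (s + 1) • (L.Estar 0 * (L.etaA s * L.tauA (r + 1)) * L.Estar 0) =
      L.varphi (r + 1) • (L.Estar 0 * (L.etaA (s + 1) * L.tauA r) * L.Estar 0) := by
    have := shift (L.θsN (s + 1)) (L.θsN (r + 1))
    rw [L.Estar_zero_mul_etaA_mul_Astar_sub (by omega),
      L.Astar_sub_mul_tauA_mul_Estar_zero (by omega)] at this
    simpa only [smul_mul_assoc, mul_smul_comm, mul_assoc] using this
  simpa only [trace_smul, trace_Estar_zero_mul_mul_Estar_zero, smul_eq_mul]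
    using congrArg trace h

theorem trace_etaA_mul_tauA_mul_Estar_zero {r s : ℕ} (hrs : r + s = d) :
    (L.etaA s * L.tauA r * L.Estar 0).trace * L.etasS d (L.θs 0) =
      L.varphiProd r * L.phiProd s := by
  induction s generalizing r with
  | zero =>
    obtain rfl : r = d := hrs
    rw [L.varphiProd_eq le_rfl, etasS_θs_zero]
    simp [etaA, phiProd, mul_comm]
  | succ s ih =>
    refine mul_left_cancel₀ (L.varphi_succ_ne_zero (i := r) (by omega)) ?_
    have ih := ih (r := r + 1) (by omega)
    rw [varphiProd_succ] at ih
    rw [phiProd_succ]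
    linear_combination L.phi (s + 1) * ih -
      L.etasS d (L.θs 0) * L.phi_succ_mul_trace_etaA_mul_tauA hrs

end LeonardSystem

/-- `tr(E_r E*_0) = φ_1⋯φ_r ϕ_1⋯ϕ_{d-r} / (η*_d(θ*_0) τ_r(θ_r) η_{d-r}(θ_r))`. -/
theorem LeonardSystem.trace_ErEs0 {K : Type*} [Field K] {d : ℕ}
    (L : LeonardSystem K d) :
    ∀ r : Fin (d+1),
      (L.E r * L.Estar 0).trace =
        L.varphiProd (r : ℕ) * L.phiProd (d - (r : ℕ)) /
          (L.etasS d (L.θs 0) * L.tauS (r : ℕ) (L.θ r) * L.etaS (d - (r : ℕ)) (L.θ r)) := by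
  intro r
  have h := L.trace_etaA_mul_tauA_mul_Estar_zero (Nat.add_sub_cancel' r.is_le)
  rw [etaA_mul_tauA, smul_mul_assoc, trace_smul, smul_eq_mul] at h
  rw [eq_div_iff (mul_ne_zero (mul_ne_zero L.etasS_θs_zero_ne_zero (L.tauS_θ_ne_zero le_rfl))
    (L.etaS_θ_ne_zero (Nat.sub_add_cancel r.is_le).le)), ← h]
  ring
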